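/- Let R = {1,…,11}, C = {12,…,22}, S = {23,…,33}, and let γ₁ = (1 2)(3 4)(5 6)(12 13)(14 15)(16 17)(23 24)(25 26)(27 28) and γ₂ = (12 23)(13 24)(14 25)(15 26)(16 27)(17 28)(18 31)(19 29)(20 30)(21 32)(22 33) be permutations of R∪C∪S. There is no Latin square of order 11 in triple system representation on point classes R, C, S that admits both γ₁ and γ₂ as autoparatopisms. -/

import Mathlib

/-!
Identify the symbols with the columns by means of `g2`, and let `ρ x y` be the row of the cell in
which column `x` carries the symbol `y`. Invariance under `g2` makes `ρ` symmetric, and invariance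
under `g1` says that `ρ` commutes with the involution `τ = (0 1)(2 3)(4 5)` of the eleven indices.

For a given row the map sending a column to its symbol is an involution of an eleven-element set,
so it has a fixed point; hence every row is some `ρ c c`, and `c ↦ ρ c c` is a bijection. So
`ρ c c` is moved by `τ` if `c` is. Also `ρ 0 c` is moved for every `c` fixed by `τ`, since otherwise
`ρ 0 c = ρ 1 c`. Thus the six moved rows are the `ρ 0 c` with `c ∈ {0, 6, …, 10}`, and
`ρ 0 2`, `ρ 0 3` are fixed rows. The fixed row `ρ 0 2 = ρ 1 3` pairs up the moved points, so it must
contain the pair `{4, 5}`; likewise for `ρ 0 3 = ρ 1 2`. Then `ρ 0 2 = ρ 4 5 = ρ 0 3`, which is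
impossible (`no_symmetric_rows`).
-/

open Pointwise

/-- The 33 points, numbered 0,…,32 (point k of the paper corresponds to k − 1). -/
abbrev P33 : Type := Fin 33

/-- The row class R = {1,…,11} of the paper, i.e. values 0,…,10. -/
def R33 : Set P33 := {x | x.val < 11}

/-- The column class C = {12,…,22} of the paper, i.e. values 11,…,21. -/
def C33 : Set P33 := {x | 11 ≤ x.val ∧ x.val < 22}

/-- The symbol class S = {23,…,33} of the paper, i.e. values 22,…,32. -/
def S33 : Set P33 := {x | 22 ≤ x.val}

/-- A Latin square of order 11 in triple system representation on R, C, S. -/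
def IsLatin (L : Set (Set P33)) : Prop :=
  (∀ t ∈ L, ∃ r ∈ R33, ∃ c ∈ C33, ∃ s ∈ S33, t = {r, c, s}) ∧
  (∀ x y : P33,
    ((x ∈ R33 ∧ y ∈ C33) ∨ (x ∈ R33 ∧ y ∈ S33) ∨ (x ∈ C33 ∧ y ∈ S33)) →
    ∃! t, t ∈ L ∧ x ∈ t ∧ y ∈ t)

/-- γ₁ = (1 2)(3 4)(5 6)(12 13)(14 15)(16 17)(23 24)(25 26)(27 28). -/
def g1 : Equiv.Perm P33 :=
  Equiv.swap 0 1 * Equiv.swap 2 3 * Equiv.swap 4 5 *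
  Equiv.swap 11 12 * Equiv.swap 13 14 * Equiv.swap 15 16 *
  Equiv.swap 22 23 * Equiv.swap 24 25 * Equiv.swap 26 27

/-- γ₂ = (12 23)(13 24)(14 25)(15 26)(16 27)(17 28)(18 31)(19 29)(20 30)(21 32)(22 33). -/
def g2 : Equiv.Perm P33 :=
  Equiv.swap 11 22 * Equiv.swap 12 23 * Equiv.swap 13 24 * Equiv.swap 14 25 *
  Equiv.swap 15 26 * Equiv.swap 16 27 * Equiv.swap 17 30 * Equiv.swap 18 28 *
  Equiv.swap 19 29 * Equiv.swap 20 31 * Equiv.swap 21 32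

/-- The action of `g1` on the indices `0, …, 10` of the points within each class. -/
def tau : Equiv.Perm (Fin 11) := Equiv.swap 0 1 * Equiv.swap 2 3 * Equiv.swap 4 5

/-- The combinatorial core: `ρ` is a symmetric `tau`-equivariant Latin square whose rows all occur
on the diagonal. -/
theorem no_symmetric_rows (ρ : Fin 11 → Fin 11 → Fin 11) (symm : ∀ x y, ρ x y = ρ y x)
    (equiv : ∀ x y, ρ (tau x) (tau y) = tau (ρ x y)) (inj : ∀ x, Function.Injective (ρ x))
    (diag : ∀ r, ∃ c, ρ c c = r) : False := by
  have diag_inj : Function.Injective fun c => ρ c c := Finite.injective_iff_surjective.2 diag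
  have diag_moved : ∀ c, tau c ≠ c → tau (ρ c c) ≠ ρ c c := by
    intro c hc h
    exact hc (diag_inj ((equiv c c).trans h))
  have mixed_moved : ∀ x c, tau x ≠ x → tau c = c → tau (ρ x c) ≠ ρ x c := by
    intro x c hx hc h
    rw [← equiv, hc, symm _ c, symm x c] at h
    exact hx (inj c h)
  -- The moved columns other than `0` see column `0` in fixed rows: the six moved rows are used up.
  have fixed_zero : ∀ y, y ∉ ({0, 6, 7, 8, 9, 10} : Finset (Fin 11)) → tau (ρ 0 y) = ρ 0 y := by
    intro y hy
    by_contra hmoved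
    have hsub : (({0, 6, 7, 8, 9, 10} : Finset (Fin 11)).image (ρ 0)) ⊆
        Finset.univ.filter fun r => tau r ≠ r := by
      intro r hr
      obtain ⟨c, hc, rfl⟩ := Finset.mem_image.1 hr
      refine Finset.mem_filter.2 ⟨Finset.mem_univ _, ?_⟩
      rcases Finset.mem_insert.1 hc with rfl | hc'
      · exact diag_moved 0 (by decide)
      · exact mixed_moved 0 c (by decide) (by
          clear hr hc
          revert c
          decide)
    have heq := Finset.eq_of_subset_of_card_le hsub (by
      rw [Finset.card_image_of_injective _ (inj 0)]
      decide)
    have hmem : ρ 0 y ∈ Finset.univ.filter fun r => tau r ≠ r :=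
      Finset.mem_filter.2 ⟨Finset.mem_univ _, hmoved⟩
    rw [← heq] at hmem
    obtain ⟨c, hc, hcy⟩ := Finset.mem_image.1 hmem
    exact hy (inj 0 hcy ▸ hc)
  -- If `a, tau a` are `2, 3` in some order, the row of `{0, a}` and `{1, tau a}` has `{4, 5}` too.
  have pair : ∀ a, a = 2 ∨ a = 3 → ρ 4 5 = ρ 0 a := by
    intro a ha
    have hfix : tau (ρ 0 a) = ρ 0 a := fixed_zero a (by rcases ha with rfl | rfl <;> decide)
    have h1 : ρ 1 (tau a) = ρ 0 a := (equiv 0 a).trans hfix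
    obtain ⟨y, hy⟩ := (Finite.injective_iff_surjective.1 (inj 4)) (ρ 0 a)
    have y_moved : tau y ≠ y := fun h => mixed_moved 4 y (by decide) h (hy ▸ hfix)
    have y4 : y ≠ 4 := by
      rintro rfl
      exact diag_moved 4 (by decide) (hy ▸ hfix)
    have ha4 : (4 : Fin 11) ≠ a ∧ (4 : Fin 11) ≠ tau a := by
      rcases ha with rfl | rfl <;> decide
    have y0 : y ≠ 0 := by
      rintro rfl
      exact ha4.1 (inj 0 ((symm 0 4).trans hy))
    have y1 : y ≠ 1 := by
      rintro rfl
      exact ha4.2 (inj 1 ((symm 1 4).trans (hy.trans h1.symm)))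
    have ya : y ≠ a := by
      rintro rfl
      have := inj y ((symm y 4).trans (hy.trans (symm 0 y)))
      exact absurd this (by decide)
    have yta : y ≠ tau a := by
      rintro rfl
      have := inj _ ((symm (tau a) 4).trans (hy.trans (h1.symm.trans (symm 1 _))))
      exact absurd this (by decide)
    have y5 : y = 5 := by
      have key : ∀ a y : Fin 11, (a = 2 ∨ a = 3) ∧
          (tau y ≠ y ∧ y ≠ 4 ∧ y ≠ 0 ∧ y ≠ 1 ∧ y ≠ a ∧ y ≠ tau a) → y = 5 := by decide
      exact key a y ⟨ha, y_moved, y4, y0, y1, ya, yta⟩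
    exact y5 ▸ hy
  have h23 := inj 0 ((pair 2 (Or.inl rfl)).symm.trans (pair 3 (Or.inr rfl)))
  exact absurd h23 (by decide)

/-- The `i`-th row. -/
def row (i : Fin 11) : P33 := ⟨i, by omega⟩

/-- The `i`-th column. -/
def col (i : Fin 11) : P33 := ⟨i + 11, by omega⟩

/-- The symbol matched with the `i`-th column by `g2`. -/
def sym (i : Fin 11) : P33 := g2 (col i)

theorem exists_row {x : P33} (hx : x ∈ R33) : ∃ i, row i = x := by
  have h : x.val < 11 := hx
  exact ⟨⟨x, h⟩, rfl⟩

theorem exists_col {x : P33} (hx : x ∈ C33) : ∃ i, col i = x := by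
  have h : 11 ≤ x.val ∧ x.val < 22 := hx
  exact ⟨⟨x - 11, by omega⟩, by ext; simp [col]; omega⟩

set_option maxRecDepth 10000 in
theorem exists_sym {x : P33} (hx : x ∈ S33) : ∃ i, sym i = x := by
  have key : ∀ x : P33, 22 ≤ x.val → ∃ i, sym i = x := by decide
  exact key x hx

theorem row_mem (i : Fin 11) : row i ∈ R33 := i.2

theorem col_mem (i : Fin 11) : col i ∈ C33 := by
  change 11 ≤ i.val + 11 ∧ i.val + 11 < 22
  omega

theorem sym_mem (i : Fin 11) : sym i ∈ S33 := by
  change 22 ≤ (sym i).val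
  revert i
  decide

theorem row_inj : Function.Injective row := by decide
theorem col_inj : Function.Injective col := by decide
theorem sym_inj : Function.Injective sym := by decide
theorem row_ne_col : ∀ i j, row i ≠ col j := by decide
theorem row_ne_sym : ∀ i j, row i ≠ sym j := by decide
theorem col_ne_sym : ∀ i j, col i ≠ sym j := by decide
theorem g1_row : ∀ i, g1 (row i) = row (tau i) := by decide
theorem g1_col : ∀ i, g1 (col i) = col (tau i) := by decide
theorem g1_sym : ∀ i, g1 (sym i) = sym (tau i) := by decide
theorem g2_row : ∀ i, g2 (row i) = row i := by decide
set_option maxRecDepth 10000 in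
theorem g2_sym : ∀ i, g2 (sym i) = col i := by decide

/-- The triple consisting of row `r`, column `x` and the symbol matched with column `y`. -/
def triple (r x y : Fin 11) : Set P33 := {row r, col x, sym y}

theorem row_mem_triple {i r x y : Fin 11} : row i ∈ triple r x y ↔ i = r := by
  simp [triple, row_inj.eq_iff, row_ne_col, row_ne_sym]

theorem col_mem_triple {i r x y : Fin 11} : col i ∈ triple r x y ↔ i = x := by
  simp [triple, col_inj.eq_iff, (row_ne_col _ _).symm, col_ne_sym]

theorem sym_mem_triple {i r x y : Fin 11} : sym i ∈ triple r x y ↔ i = y := by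
  simp [triple, sym_inj.eq_iff, (row_ne_sym _ _).symm, (col_ne_sym _ _).symm]

theorem g1_smul_triple (r x y : Fin 11) :
    g1 • triple r x y = triple (tau r) (tau x) (tau y) := by
  simp [triple, Set.smul_set_insert, g1_row, g1_col, g1_sym]

theorem g2_smul_triple (r x y : Fin 11) : g2 • triple r x y = triple r y x := by
  simp only [triple, Set.smul_set_insert, Set.smul_set_singleton, Equiv.Perm.smul_def, g2_row,
    g2_sym]
  rw [Set.pair_comm]
  rfl

/-- No Latin square of order 11 admits both γ₁ and γ₂ as autoparatopisms. -/
theorem no_latin_square_admits_g1_g2 :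
    ¬ ∃ L : Set (Set P33), IsLatin L ∧ g1 • L = L ∧ g2 • L = L := by
  rintro ⟨L, ⟨hform, hpair⟩, h1, h2⟩
  have form : ∀ t ∈ L, ∃ r x y, t = triple r x y := by
    intro t ht
    obtain ⟨r, hr, c, hc, s, hs, rfl⟩ := hform t ht
    obtain ⟨i, rfl⟩ := exists_row hr
    obtain ⟨j, rfl⟩ := exists_col hc
    obtain ⟨k, rfl⟩ := exists_sym hs
    exact ⟨i, j, k, rfl⟩
  have inv1 : ∀ {r x y}, triple r x y ∈ L → triple (tau r) (tau x) (tau y) ∈ L := by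
    intro r x y h
    rw [← g1_smul_triple, ← h1]
    exact Set.smul_mem_smul_set h
  have inv2 : ∀ {r x y}, triple r x y ∈ L → triple r y x ∈ L := by
    intro r x y h
    rw [← g2_smul_triple, ← h2]
    exact Set.smul_mem_smul_set h
  have ex_row : ∀ x y, ∃ r, triple r x y ∈ L := by
    intro x y
    obtain ⟨t, ⟨ht, hx, hy⟩, -⟩ := hpair _ _ (Or.inr (Or.inr ⟨col_mem x, sym_mem y⟩))
    obtain ⟨r, x', y', rfl⟩ := form t ht
    obtain rfl := col_mem_triple.1 hx
    obtain rfl := sym_mem_triple.1 hy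
    exact ⟨r, ht⟩
  have ex_sym : ∀ r x, ∃ y, triple r x y ∈ L := by
    intro r x
    obtain ⟨t, ⟨ht, hr, hx⟩, -⟩ := hpair _ _ (Or.inl ⟨row_mem r, col_mem x⟩)
    obtain ⟨r', x', y, rfl⟩ := form t ht
    obtain rfl := row_mem_triple.1 hr
    obtain rfl := col_mem_triple.1 hx
    exact ⟨y, ht⟩
  have uniq_row : ∀ {r r' x y}, triple r x y ∈ L → triple r' x y ∈ L → r = r' := by
    intro r r' x y h h'
    have := (hpair _ _ (Or.inr (Or.inr ⟨col_mem x, sym_mem y⟩))).unique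
      ⟨h, col_mem_triple.2 rfl, sym_mem_triple.2 rfl⟩
      ⟨h', col_mem_triple.2 rfl, sym_mem_triple.2 rfl⟩
    exact row_mem_triple.1 (this ▸ row_mem_triple.2 rfl)
  have uniq_sym : ∀ {r x y y'}, triple r x y ∈ L → triple r x y' ∈ L → y = y' := by
    intro r x y y' h h'
    have := (hpair _ _ (Or.inl ⟨row_mem r, col_mem x⟩)).unique
      ⟨h, row_mem_triple.2 rfl, col_mem_triple.2 rfl⟩
      ⟨h', row_mem_triple.2 rfl, col_mem_triple.2 rfl⟩
    exact sym_mem_triple.1 (this ▸ sym_mem_triple.2 rfl)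
  choose ρ hρ using ex_row
  choose f hf using ex_sym
  refine no_symmetric_rows ρ (fun x y => uniq_row (hρ x y) (inv2 (hρ y x)))
    (fun x y => uniq_row (hρ _ _) (inv1 (hρ x y)))
    (fun x y y' h => uniq_sym (hρ x y) (h ▸ hρ x y')) fun r => ?_
  -- The involution `f r` of an eleven-element set has a fixed point.
  have hinv : Function.Involutive (f r) := fun x => uniq_sym (hf r (f r x)) (inv2 (hf r x))
  obtain ⟨c, hc⟩ := Equiv.Perm.exists_fixed_point_of_prime (p := 2) (n := 1)
    (σ := hinv.toPerm) (by decide) (by ext x; simp [sq, hinv x])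
  have hcc : f r c = c := hc
  have := hf r c
  rw [hcc] at this
  exact ⟨c, uniq_row (hρ c c) this⟩
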